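/- The infinite series identity 6π² = Σ_{k=0}^{∞} (1/64)^k · [(1)_k (1)_k] / [(5/4)_k (7/4)_k] · (189k² + 297k + 118) / ((3k + 1)(3k + 2)) holds, where the sum is over natural numbers k and all quantities are real numbers. -/

import Mathlib

noncomputable def risingFactorial (a : ℝ) (k : ℕ) : ℝ := ∏ i ∈ Finset.range k, (a + i)

/-!
Write `T(a; c, d) = ₃F₂(a, 1, 1; c, d; 1)`, so that `T(1; 2, 2) = ζ(2)`. Because one upper parameter
`1` cancels the `k!`, two contiguous values of `T` satisfy an inhomogeneous relation of first order,
and for unit shifts of `d`, or of `a` and `d`, it comes from telescoping `(c + k - 1)` times the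
`k`-th term. Composing such shifts expresses `T(2x+1; 3x+2, 3x+2)` through its value at `x + 1`
with a multiplier tending to `1/64`. Iterating from `x = 0` gives the series for `ζ(2)`.
-/

open Filter Topology

theorem hasSum_sub_succ_of_tendsto_zero {G : Type*} [AddCommGroup G] [TopologicalSpace G]
    [IsTopologicalAddGroup G] [T2Space G] {g : ℕ → G}
    (hs : Summable fun k => g k - g (k + 1)) (hg : Tendsto g atTop (𝓝 0)) :
    HasSum (fun k => g k - g (k + 1)) (g 0) := by
  rw [hs.hasSum_iff_tendsto_nat]
  simpa only [Finset.sum_range_sub', sub_zero] using hg.const_sub (g 0)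

theorem hasSum_one_div_succ_sq :
    HasSum (fun k : ℕ => 1 / ((k : ℝ) + 1) ^ 2) (Real.pi ^ 2 / 6) := by
  simpa using (hasSum_nat_add_iff' 1).mpr hasSum_zeta_two

theorem risingFactorial_zero (a : ℝ) : risingFactorial a 0 = 1 := Finset.prod_range_zero _

theorem risingFactorial_succ (a : ℝ) (k : ℕ) :
    risingFactorial a (k + 1) = risingFactorial a k * (a + k) :=
  Finset.prod_range_succ _ _

theorem risingFactorial_pos {a : ℝ} (ha : 0 < a) (k : ℕ) : 0 < risingFactorial a k :=
  Finset.prod_pos fun _ _ => by positivity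

theorem risingFactorial_le_risingFactorial {a b : ℝ} (ha : 0 ≤ a) (hab : a ≤ b) (k : ℕ) :
    risingFactorial a k ≤ risingFactorial b k :=
  Finset.prod_le_prod (fun _ _ => by positivity) fun _ _ => by gcongr

theorem mul_risingFactorial_add_one (a : ℝ) (k : ℕ) :
    a * risingFactorial (a + 1) k = risingFactorial a k * (a + k) := by
  rw [← risingFactorial_succ, risingFactorial, risingFactorial, Finset.prod_range_succ', mul_comm]
  congr 1
  · exact Finset.prod_congr rfl fun i _ => by push_cast; ring
  · rw [Nat.cast_zero, add_zero]

theorem risingFactorial_div_le {a c : ℝ} (ha : 0 < a) (hc : a + 1 ≤ c) (k : ℕ) :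
    risingFactorial a k / risingFactorial c k ≤ a / (a + k) := by
  have hck := risingFactorial_pos (by linarith : 0 < c) k
  rw [div_le_div_iff₀ hck (by positivity), ← mul_risingFactorial_add_one]
  gcongr
  exact risingFactorial_le_risingFactorial (by positivity) hc k

/-- The `k`-th term of the hypergeometric series `₃F₂(a, 1, 1; c, d; 1)`. -/
noncomputable def hypergeomTerm (a c d : ℝ) (k : ℕ) : ℝ :=
  risingFactorial a k * risingFactorial 1 k / (risingFactorial c k * risingFactorial d k)

/-- The value of the hypergeometric series `₃F₂(a, 1, 1; c, d; 1)`. -/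
noncomputable def hypergeomSum (a c d : ℝ) : ℝ := ∑' k, hypergeomTerm a c d k

section Hypergeometric

variable {a c d : ℝ}

theorem hypergeomTerm_comm (a c d : ℝ) : hypergeomTerm a c d = hypergeomTerm a d c := by
  funext k
  rw [hypergeomTerm, hypergeomTerm, mul_comm (risingFactorial c k)]

theorem hypergeomSum_comm (a c d : ℝ) : hypergeomSum a c d = hypergeomSum a d c := by
  rw [hypergeomSum, hypergeomSum, hypergeomTerm_comm]

theorem hypergeomTerm_zero (a c d : ℝ) : hypergeomTerm a c d 0 = 1 := by
  simp only [hypergeomTerm, risingFactorial_zero, mul_one, div_one]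

theorem hypergeomTerm_succ (a c d : ℝ) (k : ℕ) :
    hypergeomTerm a c d (k + 1) =
      hypergeomTerm a c d k * ((a + k) * (1 + k) / ((c + k) * (d + k))) := by
  simp only [hypergeomTerm, risingFactorial_succ]
  rw [div_mul_div_comm]
  ring

theorem hypergeomTerm_add_one_left (ha : a ≠ 0) (c d : ℝ) (k : ℕ) :
    hypergeomTerm (a + 1) c d k = hypergeomTerm a c d k * ((a + k) / a) := by
  have h : risingFactorial (a + 1) k = risingFactorial a k * (a + k) / a := by
    rw [← mul_risingFactorial_add_one, mul_div_cancel_left₀ _ ha]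
  rw [hypergeomTerm, hypergeomTerm, h]
  ring

theorem hypergeomTerm_add_one_right (a c : ℝ) (hd : d ≠ 0) (k : ℕ) :
    hypergeomTerm a c (d + 1) k = hypergeomTerm a c d k * (d / (d + k)) := by
  have h : risingFactorial (d + 1) k = risingFactorial d k * ((d + k) / d) := by
    rw [← mul_div_assoc, ← mul_risingFactorial_add_one, mul_div_cancel_left₀ _ hd]
  rw [hypergeomTerm, hypergeomTerm, h, ← mul_assoc (risingFactorial c k), ← div_div,
    ← inv_div (d + k) d, ← div_eq_mul_inv]

theorem hypergeomTerm_pos (ha : 0 < a) (hc : 0 < c) (hd : 0 < d) (k : ℕ) :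
    0 < hypergeomTerm a c d k := by
  have := risingFactorial_pos ha k
  have := risingFactorial_pos one_pos k
  have := risingFactorial_pos hc k
  have := risingFactorial_pos hd k
  unfold hypergeomTerm
  positivity

theorem hypergeomTerm_le (ha : 0 < a) (hc : a + 1 ≤ c) (hd : 2 ≤ d) (k : ℕ) :
    hypergeomTerm a c d k ≤ (a + 1) * (1 / ((k : ℝ) + 1) ^ 2) := by
  have hak : a / (a + k) ≤ (a + 1) / (k + 1) := by
    rw [div_le_div_iff₀ (by positivity) (by positivity)]
    nlinarith [(Nat.cast_nonneg k : (0 : ℝ) ≤ k)]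
  calc hypergeomTerm a c d k
      = risingFactorial a k / risingFactorial c k * (risingFactorial 1 k / risingFactorial d k) :=
        mul_div_mul_comm _ _ _ _
    _ ≤ a / (a + k) * (1 / (1 + k)) := by
        have := risingFactorial_pos one_pos k
        have := risingFactorial_pos (by linarith : 0 < d) k
        exact mul_le_mul (risingFactorial_div_le ha hc k)
          (risingFactorial_div_le one_pos (by linarith) k) (by positivity) (by positivity)
    _ ≤ (a + 1) / (k + 1) * (1 / (1 + k)) := by gcongr
    _ = (a + 1) * (1 / ((k : ℝ) + 1) ^ 2) := by field_simp; ring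

theorem summable_hypergeomTerm (ha : 0 < a) (hc : a + 1 ≤ c) (hd : 2 ≤ d) :
    Summable (hypergeomTerm a c d) :=
  .of_nonneg_of_le (fun k => (hypergeomTerm_pos ha (by linarith) (by linarith) k).le)
    (hypergeomTerm_le ha hc hd) (hasSum_one_div_succ_sq.summable.mul_left _)

theorem hypergeomSum_nonneg (ha : 0 < a) (hc : 0 < c) (hd : 0 < d) : 0 ≤ hypergeomSum a c d :=
  tsum_nonneg fun k => (hypergeomTerm_pos ha hc hd k).le

theorem hypergeomSum_le (ha : 0 < a) (hc : a + 1 ≤ c) (hd : 2 ≤ d) :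
    hypergeomSum a c d ≤ (a + 1) * (Real.pi ^ 2 / 6) :=
  hasSum_le (hypergeomTerm_le ha hc hd) (summable_hypergeomTerm ha hc hd).hasSum
    (hasSum_one_div_succ_sq.mul_left _)

theorem hypergeomSum_one_two_two : hypergeomSum 1 2 2 = Real.pi ^ 2 / 6 := by
  refine (tsum_congr fun k => ?_).trans hasSum_one_div_succ_sq.tsum_eq
  have h1 := (risingFactorial_pos one_pos k).ne'
  have h2 : risingFactorial 2 k = risingFactorial 1 k * (1 + k) := by
    rw [← mul_risingFactorial_add_one, one_mul, one_add_one_eq_two]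
  rw [hypergeomTerm, h2]
  field_simp
  ring

theorem tendsto_mul_hypergeomTerm (ha : 0 < a) (hc : a + 1 ≤ c) (hd : 2 ≤ d) :
    Tendsto (fun k : ℕ => (c + k - 1) * hypergeomTerm a c d k) atTop (𝓝 0) := by
  have hlim : Tendsto (fun k : ℕ => c * (a + 1) * (1 / ((k : ℝ) + 1))) atTop (𝓝 0) := by
    simpa only [mul_zero] using tendsto_one_div_add_atTop_nhds_zero_nat.const_mul (c * (a + 1))
  have hfac (k : ℕ) : 0 ≤ c + k - 1 := by linarith [(Nat.cast_nonneg k : (0 : ℝ) ≤ k)]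
  have hpos := hypergeomTerm_pos ha (by linarith : 0 < c) (by linarith : 0 < d)
  refine squeeze_zero (fun k => mul_nonneg (hfac k) (hpos k).le) (fun k => ?_) hlim
  have hfac_le : c + k - 1 ≤ c * (k + 1) := by
    nlinarith [(Nat.cast_nonneg k : (0 : ℝ) ≤ k)]
  calc (c + k - 1) * hypergeomTerm a c d k
      ≤ c * (k + 1) * ((a + 1) * (1 / ((k : ℝ) + 1) ^ 2)) :=
        mul_le_mul hfac_le (hypergeomTerm_le ha hc hd k) (hpos k).le (by nlinarith [hfac k])
    _ = c * (a + 1) * (1 / ((k : ℝ) + 1)) := by field_simp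

theorem mul_hypergeomSum_add_mul_tsum (ha : 0 < a) (hc : a + 1 ≤ c) (hd : 2 ≤ d) {α β : ℝ}
    {s : ℕ → ℝ} (hs : Summable s)
    (htel : ∀ k : ℕ, α * hypergeomTerm a c d k + β * s k =
      (c + k - 1) * hypergeomTerm a c d k
        - (c + (k + 1 : ℕ) - 1) * hypergeomTerm a c d (k + 1)) :
    α * hypergeomSum a c d + β * ∑' k, s k = c - 1 := by
  have hsum := ((summable_hypergeomTerm ha hc hd).hasSum.mul_left α).add (hs.hasSum.mul_left β)
  simp only [htel] at hsum
  have h := hsum.unique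
    (hasSum_sub_succ_of_tendsto_zero hsum.summable (tendsto_mul_hypergeomTerm ha hc hd))
  rwa [hypergeomTerm_zero, Nat.cast_zero, add_zero, mul_one] at h

theorem hypergeomSum_add_one_right (ha : 0 < a) (hc : a + 1 ≤ c) (hd : 2 ≤ d) :
    (c + d - a - 2) * hypergeomSum a c d =
      c - 1 + (d - 1) * (d - a) / d * hypergeomSum a c (d + 1) := by
  have hc0 : 0 < c := by linarith
  have hd0 : 0 < d := by linarith
  have h := mul_hypergeomSum_add_mul_tsum (α := c + d - a - 2) (β := -((d - 1) * (d - a) / d))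
    ha hc hd (summable_hypergeomTerm ha hc (by linarith : 2 ≤ d + 1)) fun k => by
      rw [hypergeomTerm_succ, hypergeomTerm_add_one_right a c hd0.ne']
      push_cast
      field_simp
      ring
  rw [← hypergeomSum] at h
  linear_combination h

theorem hypergeomSum_add_one_left_right (ha : 0 < a) (hc : a + 2 ≤ c) (hd : 2 ≤ d) :
    (c - a - 1) * hypergeomSum a c d =
      c - 1 - (d - 1) * a / d * hypergeomSum (a + 1) c (d + 1) := by
  have hc0 : 0 < c := by linarith
  have hd0 : 0 < d := by linarith
  have hsum : Summable (hypergeomTerm (a + 1) c (d + 1)) :=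
    summable_hypergeomTerm (by linarith) (by linarith) (by linarith)
  have h := mul_hypergeomSum_add_mul_tsum (α := c - a - 1) (β := (d - 1) * a / d)
    ha (by linarith : a + 1 ≤ c) hd hsum fun k => by
      rw [hypergeomTerm_succ, hypergeomTerm_add_one_right (a + 1) c hd0.ne',
        hypergeomTerm_add_one_left ha.ne']
      push_cast
      field_simp
      ring
  rw [← hypergeomSum] at h
  linear_combination h

theorem hypergeomSum_diag_add_one (ha : 0 < a) (hac : a + 1 ≤ c) (hc : 2 ≤ c) :
    (2 * c - a - 2) * (2 * c - a - 1) * hypergeomSum a c c =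
      (c - 1) * (3 * c - 2 * a - 1)
        + ((c - 1) * (c - a) / c) ^ 2 * hypergeomSum a (c + 1) (c + 1) := by
  have h1 := hypergeomSum_add_one_right ha hac hc
  have h2 := hypergeomSum_add_one_right ha (by linarith : a + 1 ≤ c + 1) hc
  rw [hypergeomSum_comm a (c + 1) c] at h2
  have hμ : (c - 1) * (c - a) / c * c = (c - 1) * (c - a) :=
    div_mul_cancel₀ _ (by linarith)
  linear_combination (2 * c - a - 1) * h1 + (c - 1) * (c - a) / c * h2 + hμ

theorem hypergeomSum_diag_add_two_add_one (ha : 0 < a) (hc : a + 2 ≤ c) :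
    (c - a - 1) ^ 2 * hypergeomSum a c c =
      (c - 1) * (c - 2 * a - 1)
        + (c - 1) ^ 2 * (a * (a + 1)) / c ^ 2 * hypergeomSum (a + 2) (c + 1) (c + 1) := by
  have h1 := hypergeomSum_add_one_left_right ha hc (by linarith : 2 ≤ c)
  have h2 := hypergeomSum_add_one_left_right (by linarith : 0 < a + 1)
    (by linarith : a + 1 + 2 ≤ c + 1) (by linarith : 2 ≤ c)
  rw [hypergeomSum_comm (a + 1) (c + 1) c, add_assoc a 1 1, one_add_one_eq_two] at h2
  have hν : (c - 1) * a / c * c = (c - 1) * a := div_mul_cancel₀ _ (by linarith : 0 < c).ne'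
  linear_combination (c - a - 1) * h1 - (c - 1) * a / c * h2 - hν

end Hypergeometric

/-- The sum `₃F₂(2x+1, 1, 1; 3x+2, 3x+2; 1)`, whose recurrence under `x ↦ x + 1` produces the
accelerated series. -/
noncomputable def acceleratedSum (x : ℝ) : ℝ := hypergeomSum (2 * x + 1) (3 * x + 2) (3 * x + 2)

/-- The product of the first `n` multipliers in the recurrence of `acceleratedSum`, in closed
form. -/
noncomputable def accelerationWeight (n : ℕ) : ℝ :=
  (1 / 64) ^ n * (risingFactorial 1 n * risingFactorial 1 n) /
      (risingFactorial (5 / 4) n * risingFactorial (7 / 4) n) *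
    ((4 * n + 1) * (4 * n + 3) / (3 * (3 * n + 1) ^ 2))

theorem acceleratedSum_zero : acceleratedSum 0 = Real.pi ^ 2 / 6 := by
  rw [← hypergeomSum_one_two_two, acceleratedSum]
  norm_num only

theorem acceleratedSum_nonneg {x : ℝ} (hx : 0 ≤ x) : 0 ≤ acceleratedSum x :=
  hypergeomSum_nonneg (by positivity) (by positivity) (by positivity)

theorem acceleratedSum_le {x : ℝ} (hx : 0 ≤ x) :
    acceleratedSum x ≤ (x + 1) * (Real.pi ^ 2 / 3) := by
  have h := hypergeomSum_le (a := 2 * x + 1) (c := 3 * x + 2) (d := 3 * x + 2)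
    (by linarith) (by linarith) (by linarith)
  unfold acceleratedSum
  linarith

theorem acceleratedSum_eq_add {x : ℝ} (hx : 0 ≤ x) :
    acceleratedSum x =
      (3 * x + 1) * (189 * x ^ 2 + 297 * x + 118) /
          (12 * (3 * x + 2) * (4 * x + 1) * (4 * x + 3))
        + (3 * x + 1) ^ 2 * (x + 1) ^ 2 / (4 * (3 * x + 4) ^ 2 * (4 * x + 1) * (4 * x + 3))
          * acceleratedSum (x + 1) := by
  have h1 := hypergeomSum_diag_add_one (a := 2 * x + 1) (c := 3 * x + 2)
    (by linarith) (by linarith) (by linarith)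
  have h2 := hypergeomSum_diag_add_two_add_one (a := 2 * x + 1) (c := 3 * x + 2 + 1)
    (by linarith) (by linarith)
  have h3 := hypergeomSum_diag_add_one (a := 2 * x + 1 + 2) (c := 3 * x + 2 + 1 + 1)
    (by linarith) (by linarith) (by linarith)
  have hnext : hypergeomSum (2 * x + 1 + 2) (3 * x + 2 + 1 + 1 + 1) (3 * x + 2 + 1 + 1 + 1) =
      acceleratedSum (x + 1) := by
    unfold acceleratedSum
    ring_nf
  rw [← acceleratedSum] at h1
  rw [hnext] at h3
  set T₁ := hypergeomSum (2 * x + 1) (3 * x + 2 + 1) (3 * x + 2 + 1)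
  set T₂ := hypergeomSum (2 * x + 1 + 2) (3 * x + 2 + 1 + 1) (3 * x + 2 + 1 + 1)
  have hT₂ : T₂ = (15 * (x + 1) ^ 2 + (3 * (x + 1) ^ 2 / (3 * x + 4)) ^ 2
      * acceleratedSum (x + 1)) / ((4 * x + 3) * (4 * x + 4)) := by
    rw [eq_div_iff (by positivity)]
    linear_combination h3
  have hT₁ : T₁ = (-(x * (3 * x + 2)) + (3 * x + 2) ^ 2 * ((2 * x + 1) * (2 * x + 2))
      / (3 * x + 3) ^ 2 * T₂) / (x + 1) ^ 2 := by
    rw [eq_div_iff (by positivity)]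
    linear_combination h2
  have hT₀ : acceleratedSum x = ((3 * x + 1) * (5 * x + 3)
      + ((3 * x + 1) * (x + 1) / (3 * x + 2)) ^ 2 * T₁) / ((4 * x + 1) * (4 * x + 2)) := by
    rw [eq_div_iff (by positivity)]
    linear_combination h1
  rw [hT₀, hT₁, hT₂]
  field_simp
  ring

theorem accelerationWeight_zero : accelerationWeight 0 = 1 := by
  norm_num [accelerationWeight, risingFactorial_zero]

theorem accelerationWeight_succ (n : ℕ) :
    accelerationWeight (n + 1) = accelerationWeight n *
      ((3 * n + 1) ^ 2 * (n + 1) ^ 2 / (4 * (3 * n + 4) ^ 2 * (4 * n + 1) * (4 * n + 3))) := by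
  have h5 := risingFactorial_pos (by norm_num : (0 : ℝ) < 5 / 4) n
  have h7 := risingFactorial_pos (by norm_num : (0 : ℝ) < 7 / 4) n
  have e5 : (5 / 4 : ℝ) + n = (4 * n + 5) / 4 := by ring
  have e7 : (7 / 4 : ℝ) + n = (4 * n + 7) / 4 := by ring
  simp only [accelerationWeight, risingFactorial_succ, pow_succ (1 / 64 : ℝ), e5, e7]
  push_cast
  field_simp
  ring

theorem accelerationWeight_nonneg (n : ℕ) : 0 ≤ accelerationWeight n := by
  have := risingFactorial_pos (by norm_num : (0 : ℝ) < 5 / 4) n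
  have := risingFactorial_pos (by norm_num : (0 : ℝ) < 7 / 4) n
  have := risingFactorial_pos one_pos n
  unfold accelerationWeight
  positivity

theorem accelerationWeight_le (n : ℕ) : accelerationWeight n ≤ (1 / 64) ^ n := by
  induction n with
  | zero => rw [accelerationWeight_zero, pow_zero]
  | succ n ih =>
    rw [accelerationWeight_succ, pow_succ (1 / 64 : ℝ)]
    refine mul_le_mul ih ?_ (by positivity) (by positivity)
    rw [div_le_div_iff₀ (by positivity) (by positivity)]
    have hn : (0 : ℝ) ≤ n := n.cast_nonneg
    nlinarith [pow_nonneg hn 2, pow_nonneg hn 3]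

theorem summable_accelerationWeight_mul_acceleratedSum :
    Summable fun n : ℕ => accelerationWeight n * acceleratedSum n := by
  have hgeom : Summable fun n : ℕ => (1 / 64 : ℝ) ^ n * ((n + 1) * (Real.pi ^ 2 / 3)) := by
    have hlin := summable_pow_mul_geometric_of_norm_lt_one 1
      (by norm_num : ‖(1 / 64 : ℝ)‖ < 1)
    have hconst := summable_geometric_of_lt_one (by norm_num : (0 : ℝ) ≤ 1 / 64) (by norm_num)
    exact ((hlin.add hconst).mul_right (Real.pi ^ 2 / 3)).congr fun n => by ring
  exact .of_nonneg_of_le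
    (fun n => mul_nonneg (accelerationWeight_nonneg n) (acceleratedSum_nonneg n.cast_nonneg))
    (fun n => mul_le_mul (accelerationWeight_le n) (acceleratedSum_le n.cast_nonneg)
      (acceleratedSum_nonneg n.cast_nonneg) (by positivity)) hgeom

theorem term_eq_accelerationWeight_mul_sub (n : ℕ) :
    (1/64 : ℝ) ^ n * (risingFactorial (1) n * risingFactorial (1) n) /
        (risingFactorial (5/4) n * risingFactorial (7/4) n) *
        ((189 * (n:ℝ)^2 + 297 * (n:ℝ) + 118) / ((3 * (n:ℝ) + 1) * (3 * (n:ℝ) + 2))) =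
      36 * (accelerationWeight n * acceleratedSum n
        - accelerationWeight (n + 1) * acceleratedSum (n + 1 : ℕ)) := by
  rw [accelerationWeight_succ, acceleratedSum_eq_add n.cast_nonneg, accelerationWeight]
  push_cast
  field_simp
  ring

theorem stmt_8 :
    6 * Real.pi ^ 2 =
      ∑' k : ℕ, (1/64 : ℝ) ^ k * (risingFactorial (1) k * risingFactorial (1) k) /
        (risingFactorial (5/4) k * risingFactorial (7/4) k) * ((189 * (k:ℝ)^2 + 297 * (k:ℝ) + 118) / ((3 * (k:ℝ) + 1) * (3 * (k:ℝ) + 2))) := by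
  have hs := summable_accelerationWeight_mul_acceleratedSum
  have htel := hasSum_sub_succ_of_tendsto_zero (hs.sub ((summable_nat_add_iff 1).mpr hs))
    hs.tendsto_atTop_zero
  rw [tsum_congr term_eq_accelerationWeight_mul_sub, (htel.mul_left 36).tsum_eq,
    accelerationWeight_zero, Nat.cast_zero, acceleratedSum_zero]
  ring
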